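/- Let D = (V, A) be a directed graph with nonnegative arc costs c, let s, t ∈ V, let p be a shortest simple s-t-path with ℓ arcs, and assume there exist at least two simple s-t-paths. Then there exists a simple s-t-path q with γ_{p,2}(q) < ℓ that is efficient with respect to γ_p, i.e., the set of efficient simple s-t-paths whose second γ_p-cost component is strictly less than ℓ is nonempty. -/

import Mathlib

/-- The arcs of a walk, given as the list of consecutive vertex pairs. -/
def arcsOf {V : Type*} (q : List V) : List (V × V) := q.zip q.tail

/-- `q` is a walk (a finite sequence of consecutive arcs, possibly repeating
nodes) from `s` to `t` in the digraph on `V` with arc relation `A`. -/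
def IsDiWalk {V : Type*} (A : V → V → Prop) (s t : V) (q : List V) : Prop :=
  q ≠ [] ∧ q.head? = some s ∧ q.getLast? = some t ∧ q.Chain' A

/-- `q` is a simple path from `s` to `t`: a walk visiting no node twice. -/
def IsDiPath {V : Type*} (A : V → V → Prop) (s t : V) (q : List V) : Prop :=
  IsDiWalk A s t q ∧ q.Nodup

/-- The cost of a walk: the sum of the costs of its arcs. -/
def pathCost {V : Type*} (c : V → V → NNReal) (q : List V) : NNReal :=
  ((arcsOf q).map fun e => c e.1 e.2).sum

/-- Second component `γ_{p,2}` of the biobjective cost: the number of arcs of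
`q` (with multiplicity along `q`) that are arcs of `p`. -/
def gammaTwo {V : Type*} [DecidableEq V] (p q : List V) : ℕ :=
  ((arcsOf q).filter fun e => decide (e ∈ arcsOf p)).length

/-- `q` dominates `q'` w.r.t. the biobjective cost `γ_p = (pathCost c ·, gammaTwo p ·)`. -/
def DominatesBi {V : Type*} [DecidableEq V] (c : V → V → NNReal) (p q q' : List V) : Prop :=
  pathCost c q ≤ pathCost c q' ∧ gammaTwo p q ≤ gammaTwo p q' ∧
    (pathCost c q < pathCost c q' ∨ gammaTwo p q < gammaTwo p q')

/-- A simple `s`-`t`-path is efficient w.r.t. `γ_p` if no simple `s`-`t`-path dominates it. -/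
def EfficientPath {V : Type*} [DecidableEq V] (A : V → V → Prop) (c : V → V → NNReal)
    (s t : V) (p q : List V) : Prop :=
  IsDiPath A s t q ∧ ∀ r, IsDiPath A s t r → ¬ DominatesBi c p r q

/-- `p` is a shortest simple `s`-`t`-path w.r.t. `c`. -/
def IsShortestPath {V : Type*} (A : V → V → Prop) (c : V → V → NNReal)
    (s t : V) (p : List V) : Prop :=
  IsDiPath A s t p ∧ ∀ r, IsDiPath A s t r → pathCost c p ≤ pathCost c r

/-- `p₂` is a second shortest simple `s`-`t`-path (w.r.t. the shortest path `p₁`). -/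
def IsSecondShortestPath {V : Type*} (A : V → V → Prop) (c : V → V → NNReal)
    (s t : V) (p₁ p₂ : List V) : Prop :=
  IsDiPath A s t p₂ ∧ p₂ ≠ p₁ ∧
    ∀ r, IsDiPath A s t r → r ≠ p₁ → pathCost c p₂ ≤ pathCost c r

theorem arcsOf_cons_cons {V : Type*} (a b : V) (l : List V) :
    arcsOf (a :: b :: l) = (a, b) :: arcsOf (b :: l) := rfl

theorem fst_mem_of_mem_arcsOf {V : Type*} {q : List V} {e : V × V} (h : e ∈ arcsOf q) :
    e.1 ∈ q :=
  (List.of_mem_zip (a := e.1) (b := e.2) h).1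

theorem nodup_arcsOf {V : Type*} {q : List V} (h : q.Nodup) : (arcsOf q).Nodup := by
  induction q with
  | nil => exact List.nodup_nil
  | cons a l ih =>
    cases l with
    | nil => exact List.nodup_nil
    | cons b l =>
      rw [arcsOf_cons_cons, List.nodup_cons]
      obtain ⟨ha, hl⟩ := List.nodup_cons.mp h
      exact ⟨fun hmem => ha (fst_mem_of_mem_arcsOf hmem), ih hl⟩

/-- A simple path containing all arcs of another simple path with the same endpoints
is equal to it. -/
theorem eq_of_arcsOf_subset {V : Type*} {p q : List V} (hp : p.Nodup) (hq : q.Nodup)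
    (hp_nil : p ≠ []) (hhead : p.head? = q.head?) (hlast : p.getLast? = q.getLast?)
    (hsub : arcsOf p ⊆ arcsOf q) : q = p := by
  induction p generalizing q with
  | nil => exact absurd rfl hp_nil
  | cons a p ih =>
    cases q with
    | nil => simp at hhead
    | cons a' q =>
      obtain rfl : a = a' := by simpa using hhead
      obtain ⟨hap, hp'⟩ := List.nodup_cons.mp hp
      obtain ⟨haq, hq'⟩ := List.nodup_cons.mp hq
      cases p with
      | nil =>
        cases q with
        | nil => rfl
        | cons b q =>
          rw [List.getLast?_cons_cons, eq_comm, List.getLast?_singleton] at hlast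
          exact absurd (List.mem_of_getLast? hlast) haq
      | cons b p =>
        cases q with
        | nil => exact absurd (hsub (List.mem_cons_self (a := (a, b)))) List.not_mem_nil
        | cons b' q =>
          simp only [arcsOf_cons_cons] at hsub
          obtain rfl : b = b' := by
            rcases List.mem_cons.mp (hsub List.mem_cons_self) with h | h
            · exact (Prod.mk.inj h).2
            · exact absurd (fst_mem_of_mem_arcsOf h) haq
          rw [List.getLast?_cons_cons, List.getLast?_cons_cons] at hlast
          refine congrArg (a :: ·) (ih hp' hq' (List.cons_ne_nil _ _) rfl hlast fun e he => ?_)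
          rcases List.mem_cons.mp (hsub (List.mem_cons_of_mem _ he)) with rfl | h
          · exact absurd (fst_mem_of_mem_arcsOf he) hap
          · exact h

theorem gammaTwo_lt_of_ne {V : Type*} [DecidableEq V] {A : V → V → Prop} {s t : V}
    {p q : List V} (hp : IsDiPath A s t p) (hq : IsDiPath A s t q) (hne : q ≠ p) :
    gammaTwo p q < (arcsOf p).length := by
  by_contra! hle
  have hsubperm : ((arcsOf q).filter fun e => decide (e ∈ arcsOf p)).Subperm (arcsOf p) :=
    ((nodup_arcsOf hq.2).filter _).subperm fun e he => by simpa using (List.mem_filter.mp he).2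
  have hperm := hsubperm.perm_of_length_le hle
  obtain ⟨⟨hp_nil, hp_head, hp_last, -⟩, hp_nodup⟩ := hp
  obtain ⟨⟨-, hq_head, hq_last, -⟩, hq_nodup⟩ := hq
  exact hne (eq_of_arcsOf_subset hp_nodup hq_nodup hp_nil (hp_head.trans hq_head.symm)
    (hp_last.trans hq_last.symm) fun e he => (List.mem_filter.mp (hperm.mem_iff.mpr he)).1)

theorem DominatesBi.add_lt_add {V : Type*} [DecidableEq V] {c : V → V → NNReal}
    {p q r : List V} (h : DominatesBi c p r q) :
    pathCost c r + gammaTwo p r < pathCost c q + gammaTwo p q := by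
  obtain ⟨hcost, hgamma, hlt | hlt⟩ := h
  · exact add_lt_add_of_lt_of_le hlt (Nat.cast_le.mpr hgamma)
  · exact add_lt_add_of_le_of_lt hcost (Nat.cast_lt.mpr hlt)

theorem finite_setOf_isDiPath {V : Type*} [Finite V] (A : V → V → Prop) (s t : V) :
    {q | IsDiPath A s t q}.Finite := by
  cases nonempty_fintype V
  exact (List.finite_length_le V (Fintype.card V)).subset fun q hq => hq.2.length_le_card

/-- If `p` is a shortest simple `s`-`t`-path with `ℓ` arcs and there
exist at least two simple `s`-`t`-paths, then there exists a simple `s`-`t`-path `q` with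
`γ_{p,2}(q) < ℓ` that is efficient w.r.t. `γ_p`. -/
theorem exists_efficient_gammaTwo_lt {V : Type*} [Fintype V] [DecidableEq V]
    (A : V → V → Prop) (c : V → V → NNReal) (s t : V) (p : List V) (ℓ : ℕ)
    (hp : IsShortestPath A c s t p) (hℓ : (arcsOf p).length = ℓ)
    (htwo : ∃ q₁ q₂ : List V, IsDiPath A s t q₁ ∧ IsDiPath A s t q₂ ∧ q₁ ≠ q₂) :
    ∃ q, EfficientPath A c s t p q ∧ gammaTwo p q < ℓ := by
  obtain ⟨q₀, hq₀, hne⟩ : ∃ q, IsDiPath A s t q ∧ q ≠ p := by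
    obtain ⟨q₁, q₂, h₁, h₂, h₁₂⟩ := htwo
    by_cases h : q₁ = p
    · exact ⟨q₂, h₂, fun h' => h₁₂ (h.trans h'.symm)⟩
    · exact ⟨q₁, h₁, h⟩
  have hfin : {q | IsDiPath A s t q ∧ gammaTwo p q < ℓ}.Finite :=
    (finite_setOf_isDiPath A s t).subset fun q hq => hq.1
  obtain ⟨q, ⟨hq, hlt⟩, hmin⟩ := Set.exists_min_image _
    (fun q => pathCost c q + (gammaTwo p q : NNReal)) hfin
    ⟨q₀, hq₀, hℓ ▸ gammaTwo_lt_of_ne hp.1 hq₀ hne⟩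
  exact ⟨q, ⟨hq, fun r hr hdom =>
    (hmin r ⟨hr, hdom.2.1.trans_lt hlt⟩).not_gt hdom.add_lt_add⟩, hlt⟩
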